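/- Let G^C be an admissible cluster-DAG, let X^C, Y^C, Z^C be pairwise disjoint sets of clusters, and let V be a cluster. Let G^m be a micro graph compatible with G^C containing a Z^m-active path from X^m to Y^m. Then there exists a micro graph G^m' compatible with G^C containing a Z^m-active path π' from X^m to Y^m such that π' contains at most one collider among the variables of V, at most one fork among the variables of V, and at most one chain among the variables of V. -/

import Mathlib

/-! Mixed graphs, d-separation, structures of interest, and cluster-DAGs. -/

/-- A mixed graph: directed edges and (symmetric) bidirected edges. -/
structure MixedGraph (V : Type*) where
  dir : V → V → Prop
  bidir : V → V → Prop
  bidir_symm : ∀ a b, bidir a b → bidir b a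

namespace MixedGraph

variable {V : Type*}

/-- Adjacency: joined by a directed edge (in either orientation) or a bidirected edge. -/
def adj (G : MixedGraph V) (a b : V) : Prop := G.dir a b ∨ G.dir b a ∨ G.bidir a b

/-- The edge between `a` and `b` has an arrowhead at `b`. -/
def intoHead (G : MixedGraph V) (a b : V) : Prop := G.dir a b ∨ G.bidir a b

/-- `b` is a descendant of `a` (reachable from `a` by a directed path, including `a`). -/
def Descendant (G : MixedGraph V) (a b : V) : Prop := Relation.ReflTransGen G.dir a b

/-- The directed part of `G` is acyclic. -/
def Acyclic (G : MixedGraph V) : Prop := ∀ v, ¬ Relation.TransGen G.dir v v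

/-- `b` is a collider on the (sub)path `a - b - c`. -/
def Collider (G : MixedGraph V) (a b c : V) : Prop := G.intoHead a b ∧ G.intoHead c b

/-- The middle vertex `b` of the triple `a - b - c` is active relative to `Z`. -/
def ActiveTriple (G : MixedGraph V) (Z : Set V) (a b c : V) : Prop :=
  (G.Collider a b c → b ∈ Z ∨ ∃ d ∈ Z, G.Descendant b d) ∧
  (¬ G.Collider a b c → b ∉ Z)

/-- A walk in a mixed graph: a nonempty list of vertices, consecutive ones adjacent. -/
def IsWalk (G : MixedGraph V) (p : List V) : Prop := p ≠ [] ∧ p.Chain' G.adj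

/-- A `Z`-active walk. -/
def ActiveWalk (G : MixedGraph V) (Z : Set V) (p : List V) : Prop :=
  G.IsWalk p ∧ ∀ (i : ℕ) (h : i + 2 < p.length),
    G.ActiveTriple Z (p[i]'(by omega)) (p[i+1]'(by omega)) (p[i+2]'h)

/-- A `Z`-active path (a `Z`-active walk with pairwise distinct vertices). -/
def ActivePath (G : MixedGraph V) (Z : Set V) (p : List V) : Prop :=
  G.ActiveWalk Z p ∧ p.Nodup

/-- `X` and `Y` are d-connected given `Z` in `G`. -/
def DConnected (G : MixedGraph V) (X Y Z : Set V) : Prop :=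
  ∃ p : List V, G.ActivePath Z p ∧
    (∃ x ∈ X, p.head? = some x) ∧ (∃ y ∈ Y, p.getLast? = some y)

/-- `σ` is a subgraph of `G`. -/
def Subgraph (σ G : MixedGraph V) : Prop :=
  (∀ a b, σ.dir a b → G.dir a b) ∧ (∀ a b, σ.bidir a b → G.bidir a b)

/-- Union of two mixed graphs. -/
def union (G₁ G₂ : MixedGraph V) : MixedGraph V where
  dir a b := G₁.dir a b ∨ G₂.dir a b
  bidir a b := G₁.bidir a b ∨ G₂.bidir a b
  bidir_symm a b h := h.imp (G₁.bidir_symm a b) (G₂.bidir_symm a b)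

/-- Add the directed edge `a → b`. -/
def addDir (G : MixedGraph V) (a b : V) : MixedGraph V where
  dir x y := G.dir x y ∨ (x = a ∧ y = b)
  bidir := G.bidir
  bidir_symm := G.bidir_symm

/-- Remove the directed edge `a → b`. -/
def removeDir (G : MixedGraph V) (a b : V) : MixedGraph V where
  dir x y := G.dir x y ∧ ¬ (x = a ∧ y = b)
  bidir := G.bidir
  bidir_symm := G.bidir_symm

/-- Add the bidirected edge `a ↔ b`. -/
def addBidir (G : MixedGraph V) (a b : V) : MixedGraph V where
  dir := G.dir
  bidir x y := G.bidir x y ∨ (x = a ∧ y = b) ∨ (x = b ∧ y = a)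
  bidir_symm x y h := by
    rcases h with h | ⟨hx, hy⟩ | ⟨hx, hy⟩
    · exact Or.inl (G.bidir_symm x y h)
    · exact Or.inr (Or.inr ⟨hy, hx⟩)
    · exact Or.inr (Or.inl ⟨hy, hx⟩)

/-- Remove the bidirected edge `a ↔ b`. -/
def removeBidir (G : MixedGraph V) (a b : V) : MixedGraph V where
  dir := G.dir
  bidir x y := G.bidir x y ∧ ¬ ((x = a ∧ y = b) ∨ (x = b ∧ y = a))
  bidir_symm x y h := ⟨G.bidir_symm x y h.1, fun hc => h.2 (by tauto)⟩

/-- Remove all bidirected edges. -/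
def removeAllBidir (G : MixedGraph V) : MixedGraph V :=
  ⟨G.dir, fun _ _ => False, fun _ _ h => h.elim⟩

/-- The mutilated graph `G_{\bar A, \underline B}`: remove every edge with an arrowhead
into a vertex of `A` and every directed edge out of a vertex of `B`. -/
def mutilate (G : MixedGraph V) (A B : Set V) : MixedGraph V where
  dir a b := G.dir a b ∧ b ∉ A ∧ a ∉ B
  bidir a b := G.bidir a b ∧ a ∉ A ∧ b ∉ A
  bidir_symm a b h := ⟨G.bidir_symm a b h.1, h.2.2, h.2.1⟩

end MixedGraph

variable {V : Type*}

/-- The roots of `σ` with vertex set `S`: vertices with no outgoing directed edge. -/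
def Roots (S : Set V) (σ : MixedGraph V) : Set V := {v | v ∈ S ∧ ∀ w, ¬ σ.dir v w}

/-- Node condition for structures of interest: at most one outgoing directed edge,
or two outgoing directed edges but no edge with an arrowhead into it. -/
def OutCondition (σ : MixedGraph V) (v : V) : Prop :=
  (∀ w₁ w₂, σ.dir v w₁ → σ.dir v w₂ → w₁ = w₂) ∨
  ((∃ w₁ w₂, w₁ ≠ w₂ ∧ σ.dir v w₁ ∧ σ.dir v w₂ ∧ ∀ w, σ.dir v w → w = w₁ ∨ w = w₂) ∧
    (∀ u, ¬ σ.dir u v) ∧ (∀ u, ¬ σ.bidir u v))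

/-- `σ`, with vertex set `S`, is a structure of interest: an ADMG with a single
connected component whose nodes satisfy the out-degree condition. -/
def IsSOI (S : Set V) (σ : MixedGraph V) : Prop :=
  (∀ a b, σ.dir a b → a ∈ S ∧ b ∈ S) ∧
  (∀ a b, σ.bidir a b → a ∈ S ∧ b ∈ S) ∧
  S.Nonempty ∧
  (∀ a ∈ S, ∀ b ∈ S, Relation.ReflTransGen σ.adj a b) ∧
  σ.Acyclic ∧
  (∀ v ∈ S, OutCondition σ v)

/-- The structure of interest `σ` (with vertex set `S`) connects `X` and `Y` under `Z`
inside the mixed graph `G`. -/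
def SOIConnects (S : Set V) (σ G : MixedGraph V) (X Y Z : Set V) : Prop :=
  MixedGraph.Subgraph σ G ∧
  (S ∩ X).Nonempty ∧ (S ∩ Y).Nonempty ∧
  Roots S σ ⊆ X ∪ Y ∪ Z ∧
  (∀ v ∈ S, v ∉ Roots S σ → v ∉ Z)

/-- `b` is a fork on the (sub)path `a - b - c`. -/
def ForkAt (G : MixedGraph V) (a b c : V) : Prop := G.dir b a ∧ G.dir b c

/-- `b` is a chain on the (sub)path `a - b - c`. -/
def ChainAt (G : MixedGraph V) (a b c : V) : Prop :=
  (G.dir a b ∧ G.dir b c) ∨ (G.dir c b ∧ G.dir b a)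

/-- The path `p` contains at most one interior triple satisfying `P` whose middle
vertex lies in `T`. -/
def AtMostOneTriple (P : V → V → V → Prop) (T : Set V) (p : List V) : Prop :=
  ∀ (i j : ℕ) (hi : i + 2 < p.length) (hj : j + 2 < p.length),
    P (p[i]'(by omega)) (p[i+1]'(by omega)) (p[i+2]'hi) →
    P (p[j]'(by omega)) (p[j+1]'(by omega)) (p[j+2]'hj) →
    (p[i+1]'(by omega)) ∈ T → (p[j+1]'(by omega)) ∈ T → i = j

/-- `σ` is exactly the subgraph consisting of the vertices of the path `p` and
one edge joining each pair of consecutive vertices of `p`. -/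
def IsPathGraph (σ : MixedGraph V) (p : List V) : Prop :=
  p ≠ [] ∧ p.Nodup ∧
  (∀ (i : ℕ) (h : i + 1 < p.length),
    (σ.dir (p[i]'(by omega)) (p[i+1]'h) ∧ ¬ σ.dir (p[i+1]'h) (p[i]'(by omega)) ∧
      ¬ σ.bidir (p[i]'(by omega)) (p[i+1]'h)) ∨
    (σ.dir (p[i+1]'h) (p[i]'(by omega)) ∧ ¬ σ.dir (p[i]'(by omega)) (p[i+1]'h) ∧
      ¬ σ.bidir (p[i]'(by omega)) (p[i+1]'h)) ∨
    (σ.bidir (p[i]'(by omega)) (p[i+1]'h) ∧ ¬ σ.dir (p[i]'(by omega)) (p[i+1]'h) ∧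
      ¬ σ.dir (p[i+1]'h) (p[i]'(by omega)))) ∧
  (∀ a b, σ.dir a b → ∃ (i : ℕ) (h : i + 1 < p.length),
    ((p[i]'(by omega)) = a ∧ (p[i+1]'h) = b) ∨ ((p[i]'(by omega)) = b ∧ (p[i+1]'h) = a)) ∧
  (∀ a b, σ.bidir a b → ∃ (i : ℕ) (h : i + 1 < p.length),
    ((p[i]'(by omega)) = a ∧ (p[i+1]'h) = b) ∨ ((p[i]'(by omega)) = b ∧ (p[i+1]'h) = a))

/-- A cluster-DAG: a mixed graph on clusters (self-loops and cycles allowed),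
each cluster carrying a positive size. -/
structure ClusterDAG (C : Type*) where
  graph : MixedGraph C
  size : C → ℕ
  size_pos : ∀ c, 0 < size c

namespace ClusterDAG

variable {C : Type*}

/-- The micro vertex set: for each cluster `c`, variables `c_1, …, c_{#c}`. -/
abbrev MicroV (GC : ClusterDAG C) : Type _ := Σ c : C, Fin (GC.size c)

/-- The micro graph `Gm` is compatible with the cluster-DAG `GC`. -/
def Compatible (GC : ClusterDAG C) (Gm : MixedGraph GC.MicroV) : Prop :=
  Gm.Acyclic ∧
  (∀ A B : C, A ≠ B →
    (GC.graph.dir A B ↔ ∃ (i : Fin (GC.size A)) (j : Fin (GC.size B)), Gm.dir ⟨A, i⟩ ⟨B, j⟩)) ∧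
  (∀ A B : C, A ≠ B →
    (GC.graph.bidir A B ↔ ∃ (i : Fin (GC.size A)) (j : Fin (GC.size B)), Gm.bidir ⟨A, i⟩ ⟨B, j⟩)) ∧
  (∀ A : C, (GC.graph.dir A A ↔ ∃ i j : Fin (GC.size A), i ≠ j ∧ Gm.dir ⟨A, i⟩ ⟨A, j⟩)) ∧
  (∀ A : C, (GC.graph.bidir A A ↔ ∃ i j : Fin (GC.size A), i ≠ j ∧ Gm.bidir ⟨A, i⟩ ⟨A, j⟩))

/-- `GC` is admissible: some compatible micro graph exists. -/
def Admissible (GC : ClusterDAG C) : Prop := ∃ Gm, GC.Compatible Gm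

/-- The set of micro variables belonging to clusters of `S`. -/
def microSet (GC : ClusterDAG C) (S : Set C) : Set GC.MicroV := {v | v.1 ∈ S}

/-- The indexing inside each cluster is consistent with a topological order of `Gm`:
`V_i` is never a strict descendant of `V_j` when `i < j`. -/
def TopoConsistent (GC : ClusterDAG C) (Gm : MixedGraph GC.MicroV) : Prop :=
  ∀ (A : C) (i j : Fin (GC.size A)), i < j →
    ¬ Relation.TransGen Gm.dir ⟨A, j⟩ ⟨A, i⟩

/-- Remove all bidirected edges of the cluster-DAG. -/
def removeAllBidir (GC : ClusterDAG C) : ClusterDAG C :=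
  ⟨GC.graph.removeAllBidir, GC.size, GC.size_pos⟩

/-- Add the bidirected edge `A ↔ B` to the cluster-DAG. -/
def addBidir (GC : ClusterDAG C) (A B : C) : ClusterDAG C :=
  ⟨GC.graph.addBidir A B, GC.size, GC.size_pos⟩

/-- Remove all directed self-loops of the cluster-DAG. -/
def removeDirSelfLoops (GC : ClusterDAG C) : ClusterDAG C :=
  ⟨⟨fun A B => GC.graph.dir A B ∧ A ≠ B, GC.graph.bidir, GC.graph.bidir_symm⟩,
    GC.size, GC.size_pos⟩

/-- Add a directed self-loop on the cluster `Vc`. -/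
def addDirSelfLoop (GC : ClusterDAG C) (Vc : C) : ClusterDAG C :=
  ⟨⟨fun A B => GC.graph.dir A B ∨ (A = Vc ∧ B = Vc), GC.graph.bidir, GC.graph.bidir_symm⟩,
    GC.size, GC.size_pos⟩

/-- Remove all intra-cluster directed edges of a micro graph. -/
def removeIntraDir (GC : ClusterDAG C) (Gm : MixedGraph GC.MicroV) : MixedGraph GC.MicroV where
  dir a b := Gm.dir a b ∧ a.1 ≠ b.1
  bidir := Gm.bidir
  bidir_symm := Gm.bidir_symm

/-- Reduce every cluster of size greater than 4 to size 4. -/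
def truncate4 (GC : ClusterDAG C) : ClusterDAG C where
  graph := GC.graph
  size c := min (GC.size c) 4
  size_pos c := lt_min (GC.size_pos c) (by norm_num)

/-- The minimal compatible graph `G^m_min` of a cluster-DAG. -/
def minGraph (GC : ClusterDAG C) : MixedGraph GC.MicroV where
  dir a b :=
    (a.1 = b.1 ∧ GC.graph.dir a.1 b.1 ∧ (a.2 : ℕ) < (b.2 : ℕ)) ∨
    (a.1 ≠ b.1 ∧ GC.graph.dir a.1 b.1 ∧ (a.2 : ℕ) = 0 ∧ (b.2 : ℕ) = GC.size b.1 - 1)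
  bidir a b := GC.graph.bidir a.1 b.1 ∧ a ≠ b
  bidir_symm a b h := ⟨GC.graph.bidir_symm _ _ h.1, Ne.symm h.2⟩

/-- The unfolded graph `G^{m,C}_u` of a cluster-DAG. -/
def unfolded (GC : ClusterDAG C) : MixedGraph GC.MicroV where
  dir a b := (minGraph GC).dir a b ∨
    (a.1 ≠ b.1 ∧ GC.graph.dir a.1 b.1 ∧ MixedGraph.Acyclic ((minGraph GC).addDir a b))
  bidir := (minGraph GC).bidir
  bidir_symm := (minGraph GC).bidir_symm

/-- Relabel a micro graph by a permutation of the indices within each cluster. -/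
def relabel (GC : ClusterDAG C) (Gm : MixedGraph GC.MicroV)
    (e : ∀ c, Fin (GC.size c) ≃ Fin (GC.size c)) : MixedGraph GC.MicroV where
  dir a b := Gm.dir ⟨a.1, (e a.1).symm a.2⟩ ⟨b.1, (e b.1).symm b.2⟩
  bidir a b := Gm.bidir ⟨a.1, (e a.1).symm a.2⟩ ⟨b.1, (e b.1).symm b.2⟩
  bidir_symm a b h := Gm.bidir_symm _ _ h

end ClusterDAG

/-! Take an active path from `X` to `Y` that is shortest over all compatible micro graphs, and
suppose that it reads `…, a, u, …, w, d, …` with `u` and `w` in the same cluster. Moving the edge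
between `w` and `d` to an edge between `u` and `d` leaves the cluster graph unchanged, and it cuts
out the segment between `u` and `w` unless it closes a directed cycle. As at most one of `u`, `w`
is a descendant of the other, for two colliders, two forks or two chains of opposite directions this
shortcut works either at `u` or, reversing the path, at `w`. It also works for two chains of the
same direction, except for `a → u → n, …, m → w → d` with `w` an ancestor of `u`. There the segment
is not a directed path, so following it from `u` one reaches an active collider and `n` is an
ancestor of the conditioning set. Adding the edge `w → n` therefore makes `n` an active collider on
the shorter path `…, a → u → n ← w → d, …`. -/

namespace MixedGraph

section Basic

variable {G G' : MixedGraph V} {Z : Set V} {a a' b c c' x y : V}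

/-- The ancestors of `Z`: the vertices with a descendant in `Z`, members of `Z` included. An active
collider is exactly a collider in this set. -/
def ancestors (G : MixedGraph V) (Z : Set V) : Set V := {v | ∃ d ∈ Z, G.Descendant v d}

lemma subset_ancestors : Z ⊆ G.ancestors Z := fun z hz => ⟨z, hz, .refl⟩

lemma Descendant.mem_ancestors (h : G.Descendant a b) (hb : b ∈ G.ancestors Z) :
    a ∈ G.ancestors Z :=
  let ⟨z, hz, hbz⟩ := hb; ⟨z, hz, h.trans hbz⟩

lemma ancestors_mono (h : ∀ a b, G.dir a b → G'.dir a b) : G.ancestors Z ⊆ G'.ancestors Z :=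
  fun _ ⟨z, hz, hd⟩ => ⟨z, hz, Relation.ReflTransGen.mono h _ _ hd⟩

lemma bidir_comm : G.bidir a b ↔ G.bidir b a := ⟨G.bidir_symm a b, G.bidir_symm b a⟩

lemma adj_iff_intoHead : G.adj a b ↔ G.intoHead a b ∨ G.intoHead b a := by
  simp only [adj, intoHead, bidir_comm (a := b)]
  tauto

lemma adj_comm : G.adj a b ↔ G.adj b a := by
  rw [adj_iff_intoHead, adj_iff_intoHead, or_comm]

lemma intoHead_addDir : (G.addDir a b).intoHead x y ↔ G.intoHead x y ∨ x = a ∧ y = b :=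
  or_right_comm

lemma dir_of_not_intoHead (h : G.adj a b) (hba : ¬ G.intoHead b a) : G.dir a b := by
  simp only [adj, intoHead, bidir_comm (a := b)] at h hba
  tauto

lemma Acyclic.not_descendant_of_dir (hG : G.Acyclic) (h : G.dir a b) : ¬ G.Descendant b a :=
  fun hba => hG a (.head' h hba)

lemma Acyclic.ne_of_dir (hG : G.Acyclic) (h : G.dir a b) : a ≠ b :=
  fun hab => hG.not_descendant_of_dir h (hab ▸ .refl)

lemma Acyclic.descendant_antisymm (hG : G.Acyclic) (hab : G.Descendant a b)
    (hba : G.Descendant b a) : a = b := by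
  obtain rfl | hab' := Relation.reflTransGen_iff_eq_or_transGen.mp hab
  · rfl
  · exact absurd (hab'.trans_left hba) (hG a)

lemma Acyclic.bidir_of_intoHead (hG : G.Acyclic) (hab : G.intoHead a b) (hba : G.intoHead b a) :
    G.bidir a b :=
  hab.elim (fun h => hba.elim (fun h' => absurd (.single h') (hG.not_descendant_of_dir h))
    (G.bidir_symm b a)) id

lemma Acyclic.addDir (hG : G.Acyclic) (h : ¬ G.Descendant b a) : (G.addDir a b).Acyclic := by
  have htrans {x y : V} (hxy : Relation.TransGen (G.addDir a b).dir x y) :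
      Relation.TransGen G.dir x y ∨ G.Descendant x a ∧ G.Descendant b y := by
    induction hxy with
    | single hxy =>
      obtain hxy | ⟨rfl, rfl⟩ := hxy
      exacts [.inl (.single hxy), .inr ⟨.refl, .refl⟩]
    | tail _ hyz ih =>
      obtain hyz | ⟨rfl, rfl⟩ := hyz
      · exact ih.imp (.tail · hyz) (.imp_right (.tail · hyz))
      · exact .inr ⟨ih.elim (·.to_reflTransGen) (·.1), .refl⟩
  exact fun v hv => (htrans hv).elim (hG v) fun ⟨hva, hbv⟩ => h (hbv.trans hva)

lemma activeTriple_iff :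
    G.ActiveTriple Z a b c ↔
      (G.Collider a b c → b ∈ G.ancestors Z) ∧ (¬ G.Collider a b c → b ∉ Z) := by
  have hb : b ∈ Z ∨ (∃ d ∈ Z, G.Descendant b d) ↔ b ∈ G.ancestors Z :=
    or_iff_right_of_imp (@subset_ancestors _ G Z b)
  rw [ActiveTriple, hb]

lemma ActiveTriple.mem_ancestors (h : G.ActiveTriple Z a b c) (hb : G.Collider a b c) :
    b ∈ G.ancestors Z :=
  (activeTriple_iff.mp h).1 hb

lemma ActiveTriple.collider_of_mem (h : G.ActiveTriple Z a b c) (hb : b ∈ Z) :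
    G.Collider a b c :=
  of_not_not fun hcol => h.2 hcol hb

lemma ActiveTriple.congr (h : G.ActiveTriple Z a b c)
    (ha : G'.intoHead a' b ↔ G.intoHead a b) (hc : G'.intoHead c' b ↔ G.intoHead c b)
    (hanc : G.ancestors Z ⊆ G'.ancestors Z) : G'.ActiveTriple Z a' b c' := by
  rw [activeTriple_iff, Collider] at h ⊢
  rw [ha, hc]
  exact ⟨fun hb => hanc (h.1 hb), h.2⟩

lemma collider_comm : G.Collider a b c ↔ G.Collider c b a := and_comm

lemma activeTriple_comm : G.ActiveTriple Z a b c ↔ G.ActiveTriple Z c b a := by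
  rw [ActiveTriple, ActiveTriple, collider_comm]

end Basic

section ActiveWalk

variable {G G' : MixedGraph V} {Z : Set V} {a b c x y : V} {l p q P S : List V}

lemma activeWalk_iff_infix :
    G.ActiveWalk Z p ↔
      p ≠ [] ∧ p.IsChain G.adj ∧ ∀ a b c, [a, b, c] <:+: p → G.ActiveTriple Z a b c := by
  rw [ActiveWalk, IsWalk, and_assoc]
  refine and_congr_right fun _ => and_congr_right fun _ => ⟨fun h a b c habc => ?_,
    fun h i hi => h _ _ _ ⟨p.take i, p.drop (i + 3), ?_⟩⟩
  · obtain ⟨s, t, rfl⟩ := habc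
    simpa using h s.length (by simp)
  · simp

lemma ActiveWalk.activeTriple (h : G.ActiveWalk Z p) (habc : [a, b, c] <:+: p) :
    G.ActiveTriple Z a b c :=
  (activeWalk_iff_infix.mp h).2.2 a b c habc

lemma ActiveWalk.of_isInfix (h : G.ActiveWalk Z p) (hq : q <:+: p) (hne : q ≠ []) :
    G.ActiveWalk Z q := by
  rw [activeWalk_iff_infix] at h ⊢
  exact ⟨hne, h.2.1.infix hq, fun a b c habc => h.2.2 a b c (habc.trans hq)⟩

lemma ActiveWalk.reverse (h : G.ActiveWalk Z p) : G.ActiveWalk Z p.reverse := by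
  rw [activeWalk_iff_infix] at h ⊢
  refine ⟨by simpa using h.1, List.isChain_reverse.mpr (h.2.1.imp fun _ _ => adj_comm.mp),
    fun a b c habc => activeTriple_comm.mp (h.2.2 c b a (List.reverse_infix.mp ?_))⟩
  simpa using habc

lemma ActiveWalk.congr (h : G.ActiveWalk Z p)
    (hinto : ∀ x ∈ p, ∀ y ∈ p, (G'.intoHead x y ↔ G.intoHead x y))
    (hanc : G.ancestors Z ⊆ G'.ancestors Z) : G'.ActiveWalk Z p := by
  rw [activeWalk_iff_infix] at h ⊢
  refine ⟨h.1, h.2.1.imp_of_mem_imp fun x y hx hy hxy => ?_, fun a b c habc => ?_⟩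
  · rw [adj_iff_intoHead] at hxy ⊢
    rwa [hinto x hx y hy, hinto y hy x hx]
  · have hmem : ∀ v ∈ [a, b, c], v ∈ p := habc.subset
    exact (h.2.2 a b c habc).congr (hinto _ (hmem a (by simp)) _ (hmem b (by simp)))
      (hinto _ (hmem c (by simp)) _ (hmem b (by simp))) hanc

lemma activeWalk_cons_cons :
    G.ActiveWalk Z (a :: b :: l) ↔
      G.adj a b ∧ (∀ c ∈ l.head?, G.ActiveTriple Z a b c) ∧ G.ActiveWalk Z (b :: l) := by
  have htriples : (∀ x y z, [x, y, z] <:+: a :: b :: l → G.ActiveTriple Z x y z) ↔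
      (∀ c ∈ l.head?, G.ActiveTriple Z a b c) ∧
        ∀ x y z, [x, y, z] <:+: b :: l → G.ActiveTriple Z x y z := by
    cases l
    · simp [List.infix_cons_iff (l₂ := [b])]
    · simp only [List.infix_cons_iff (l₂ := b :: _), or_imp, forall_and, List.cons_prefix_cons]
      aesop
  simp only [activeWalk_iff_infix, List.isChain_cons_cons, htriples, ne_eq, reduceCtorEq,
    not_false_eq_true, true_and]
  tauto

lemma activeWalk_singleton : G.ActiveWalk Z [a] :=
  ⟨⟨List.cons_ne_nil _ _, .singleton a⟩, by simp⟩

lemma activeWalk_pair : G.ActiveWalk Z [a, b] ↔ G.adj a b := by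
  simp [activeWalk_cons_cons, activeWalk_singleton]

lemma activeWalk_append_cons_cons :
    G.ActiveWalk Z (P ++ x :: y :: S) ↔
      G.ActiveWalk Z (P ++ [x, y]) ∧ G.ActiveWalk Z (x :: y :: S) := by
  induction P with
  | nil => simp +contextual [activeWalk_cons_cons (l := S), activeWalk_pair]
  | cons v P ih =>
    cases P with
    | nil =>
      simp only [List.nil_append, List.cons_append, activeWalk_cons_cons, activeWalk_singleton,
        List.head?_cons]
      tauto
    | cons v' P => simp_all [activeWalk_cons_cons (a := v), and_assoc]

lemma ActiveWalk.mem_ancestors_or_isChain_dir (h : G.ActiveWalk Z (x :: y :: l))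
    (hxy : G.dir x y) : y ∈ G.ancestors Z ∨ (x :: y :: l).IsChain G.dir := by
  induction l generalizing x y with
  | nil => simp [hxy]
  | cons z l ih =>
    obtain ⟨-, hy, hyl⟩ := activeWalk_cons_cons.mp h
    by_cases hzy : G.intoHead z y
    · exact .inl ((hy z rfl).mem_ancestors ⟨.inl hxy, hzy⟩)
    · have hyz : G.dir y z := dir_of_not_intoHead (activeWalk_cons_cons.mp hyl).1 hzy
      exact (ih hyl hyz).imp (Descendant.mem_ancestors (.single hyz)) (.cons_cons hxy)

end ActiveWalk

section AddDir

variable {G : MixedGraph V} {Z : Set V} {a b : V} {p : List V}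

lemma ancestors_subset_addDir : G.ancestors Z ⊆ (G.addDir a b).ancestors Z :=
  ancestors_mono fun _ _ => .inl

lemma ActiveWalk.addDir (h : G.ActiveWalk Z p) (hab : a ∉ p ∨ b ∉ p) :
    (G.addDir a b).ActiveWalk Z p := by
  refine h.congr (fun x hx y hy => ?_) ancestors_subset_addDir
  rw [intoHead_addDir, or_iff_left]
  rintro ⟨rfl, rfl⟩
  exact hab.elim (absurd hx) (absurd hy)

end AddDir

section Graft

variable {G : MixedGraph V} {s t n x y : V}

/-- The endpoint `v` of an edge `v – w` after edges at `n` have had their endpoints `s` and `t`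
exchanged. -/
def swapEndpoint [DecidableEq V] (s t n w v : V) : V := if w = n then Equiv.swap s t v else v

/-- The graph obtained from `G` by exchanging the bidirected edges `s ↔ n` and `t ↔ n`: each is
present in the new graph iff the other one is present in `G`. -/
def swapBidir [DecidableEq V] (G : MixedGraph V) (s t n : V) : MixedGraph V where
  dir := G.dir
  bidir x y := G.bidir (swapEndpoint s t n y x) (swapEndpoint s t n x y)
  bidir_symm _ _ := G.bidir_symm _ _

/-- `G'` is a graft of the edge between `s` and `n` onto `t`: it keeps all directed edges of `G`,
has an edge between `t` and `n` with the arrowheads of the edge of `G` between `s` and `n`, and has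
the arrowheads of `G` everywhere except possibly between `n` and the two vertices `s`, `t`. -/
structure IsGraft (G G' : MixedGraph V) (s t n : V) : Prop where
  dir_le : ∀ x y, G.dir x y → G'.dir x y
  intoHead_iff : ∀ {x y}, (x = n → y ≠ s ∧ y ≠ t) → (y = n → x ≠ s ∧ x ≠ t) →
    (G'.intoHead x y ↔ G.intoHead x y)
  intoHead_right : G'.intoHead t n ↔ G.intoHead s n
  intoHead_left : G'.intoHead n t ↔ G.intoHead n s

lemma IsGraft.ancestors_subset {G' : MixedGraph V} {Z : Set V} (h : IsGraft G G' s t n) :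
    G.ancestors Z ⊆ G'.ancestors Z :=
  ancestors_mono h.dir_le

lemma IsGraft.activeWalk_of_notMem {G' : MixedGraph V} {Z : Set V} {p : List V}
    (h : IsGraft G G' s t n) (hp : G.ActiveWalk Z p) (hn : n ∉ p) : G'.ActiveWalk Z p :=
  hp.congr (fun _ hx _ hy => h.intoHead_iff (fun hxn => absurd hx (hxn ▸ hn))
    (fun hyn => absurd hy (hyn ▸ hn))) h.ancestors_subset

lemma IsGraft.activeWalk_cons {G' : MixedGraph V} {Z : Set V} {l : List V}
    (h : IsGraft G G' s t n) (hl : G.ActiveWalk Z (s :: n :: l)) (hs : s ∉ n :: l)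
    (ht : t ∉ n :: l) : G'.ActiveWalk Z (t :: n :: l) := by
  have hinto : ∀ x ∈ n :: l, ∀ y ∈ n :: l, (G'.intoHead x y ↔ G.intoHead x y) :=
    fun x hx y hy => h.intoHead_iff
      (fun _ => ⟨ne_of_mem_of_not_mem hy hs, ne_of_mem_of_not_mem hy ht⟩)
      (fun _ => ⟨ne_of_mem_of_not_mem hx hs, ne_of_mem_of_not_mem hx ht⟩)
  obtain ⟨hadj, htriple, hwalk⟩ := activeWalk_cons_cons.mp hl
  refine activeWalk_cons_cons.mpr ⟨?_, fun r hr => (htriple r hr).congr h.intoHead_right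
    (hinto r ?_ n ?_) h.ancestors_subset, hwalk.congr hinto h.ancestors_subset⟩
  · rwa [adj_iff_intoHead, h.intoHead_right, h.intoHead_left, ← adj_iff_intoHead]
  · exact List.mem_cons_of_mem n (List.mem_of_mem_head? hr)
  · exact List.mem_cons_self

variable [DecidableEq V]

lemma swapEndpoint_eq_iff (hs : n ≠ s) (ht : n ≠ t) : swapEndpoint s t n x y = n ↔ y = n := by
  rw [swapEndpoint]
  split_ifs
  · rw [Equiv.swap_apply_eq_iff, Equiv.swap_apply_of_ne_of_ne hs ht]
  · rfl

lemma swapEndpoint_swapEndpoint (hs : n ≠ s) (ht : n ≠ t) :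
    swapEndpoint s t n (swapEndpoint s t n y x) (swapEndpoint s t n x y) = y := by
  rw [swapEndpoint]
  simp only [swapEndpoint_eq_iff hs ht]
  rw [swapEndpoint]
  split_ifs
  · exact Equiv.swap_apply_self ..
  · rfl

lemma swapEndpoint_ne (hs : n ≠ s) (ht : n ≠ t) (hxy : x ≠ y) :
    swapEndpoint s t n y x ≠ swapEndpoint s t n x y := fun h => hxy <| by
  rw [← swapEndpoint_swapEndpoint hs ht (x := y) (y := x), h]
  nth_rw 1 [← h]
  exact swapEndpoint_swapEndpoint hs ht

lemma swapBidir_bidir_left (ht : n ≠ t) :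
    (G.swapBidir s t n).bidir t n ↔ G.bidir s n := by
  simp [swapBidir, swapEndpoint, ht.symm]

lemma swapBidir_bidir_of_ne (hx : x = n → y ≠ s ∧ y ≠ t) (hy : y = n → x ≠ s ∧ x ≠ t) :
    (G.swapBidir s t n).bidir x y ↔ G.bidir x y := by
  have hfix {v w : V} (h : w = n → v ≠ s ∧ v ≠ t) : swapEndpoint s t n w v = v :=
    ite_eq_right_iff.mpr fun hw => Equiv.swap_apply_of_ne_of_ne (h hw).1 (h hw).2
  simp only [swapBidir, hfix hx, hfix hy]

lemma swapBidir_intoHead (hx : x = n → y ≠ s ∧ y ≠ t) (hy : y = n → x ≠ s ∧ x ≠ t) :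
    (G.swapBidir s t n).intoHead x y ↔ G.intoHead x y :=
  or_congr_right (swapBidir_bidir_of_ne hx hy)

lemma isGraft_swapBidir (ht : n ≠ t) (hsn : G.bidir s n) : IsGraft G (G.swapBidir s t n) s t n where
  dir_le _ _ := id
  intoHead_iff := swapBidir_intoHead
  intoHead_right := iff_of_true (.inr ((swapBidir_bidir_left ht).mpr hsn)) (.inr hsn)
  intoHead_left := iff_of_true (.inr (bidir_comm.mp ((swapBidir_bidir_left ht).mpr hsn)))
    (.inr (bidir_comm.mp hsn))

lemma isGraft_addDir_right (ht : n ≠ t) (hsn : G.intoHead s n) (hns : ¬ G.intoHead n s)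
    (hdir : ¬ G.dir n t) : IsGraft G ((G.swapBidir s t n).addDir t n) s t n where
  dir_le _ _ := .inl
  intoHead_iff hx hy := by
    rw [intoHead_addDir, swapBidir_intoHead hx hy, or_iff_left fun h => (hy h.2).2 h.1]
  intoHead_right := iff_of_true (.inl (.inr ⟨rfl, rfl⟩)) hsn
  intoHead_left := by
    refine iff_of_false (fun h => ?_) hns
    obtain (h | h) | h := intoHead_addDir.mp h
    · exact hdir h
    · exact hns (.inr (bidir_comm.mp ((swapBidir_bidir_left ht).mp (bidir_comm.mp h))))
    · exact ht h.1

lemma isGraft_addDir_left (ht : n ≠ t) (hns : G.intoHead n s) (hsn : ¬ G.intoHead s n)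
    (hdir : ¬ G.dir t n) : IsGraft G ((G.swapBidir s t n).addDir n t) s t n where
  dir_le _ _ := .inl
  intoHead_iff hx hy := by
    rw [intoHead_addDir, swapBidir_intoHead hx hy, or_iff_left fun h => (hx h.1).2 h.2]
  intoHead_right := by
    refine iff_of_false (fun h => ?_) hsn
    obtain (h | h) | h := intoHead_addDir.mp h
    · exact hdir h
    · exact hsn (.inr ((swapBidir_bidir_left ht).mp h))
    · exact ht h.2
  intoHead_left := iff_of_true (.inl (.inr ⟨rfl, rfl⟩)) hns

end Graft

end MixedGraph

namespace ClusterDAG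

variable {C : Type*} {GC : ClusterDAG C} {G : MixedGraph GC.MicroV} {s t n x y x' y' : GC.MicroV}

lemma exists_fst_eq_iff {A B : C} {r : GC.MicroV → GC.MicroV → Prop} :
    (∃ x y : GC.MicroV, x.1 = A ∧ y.1 = B ∧ r x y) ↔ ∃ i j, r ⟨A, i⟩ ⟨B, j⟩ :=
  ⟨fun ⟨⟨_, i⟩, ⟨_, j⟩, hA, hB, h⟩ => by subst hA hB; exact ⟨i, j, h⟩,
    fun ⟨i, j, h⟩ => ⟨⟨A, i⟩, ⟨B, j⟩, rfl, rfl, h⟩⟩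

lemma compatible_iff :
    GC.Compatible G ↔ G.Acyclic ∧
      (∀ A B, GC.graph.dir A B ↔ ∃ x y : GC.MicroV, x.1 = A ∧ y.1 = B ∧ x ≠ y ∧ G.dir x y) ∧
      ∀ A B, GC.graph.bidir A B ↔ ∃ x y : GC.MicroV, x.1 = A ∧ y.1 = B ∧ x ≠ y ∧ G.bidir x y := by
  have hedges (r : C → C → Prop) (q : GC.MicroV → GC.MicroV → Prop) :
      (∀ A B, r A B ↔ ∃ x y : GC.MicroV, x.1 = A ∧ y.1 = B ∧ x ≠ y ∧ q x y) ↔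
        (∀ A B : C, A ≠ B → (r A B ↔ ∃ i j, q ⟨A, i⟩ ⟨B, j⟩)) ∧
          ∀ A : C, (r A A ↔ ∃ i j, i ≠ j ∧ q ⟨A, i⟩ ⟨A, j⟩) := by
    simp only [exists_fst_eq_iff]
    refine ⟨fun h => ⟨fun A B hAB => by simp [h, hAB], fun A => by simp [h]⟩, fun h A B => ?_⟩
    obtain rfl | hAB := eq_or_ne A B
    · simp [h.2]
    · simp [h.1 A B hAB, hAB]
  rw [hedges, hedges, Compatible]
  tauto

lemma Compatible.addDir (hG : GC.Compatible G) (hxy : G.dir x y) (hx : x'.1 = x.1)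
    (hy : y'.1 = y.1) (h : ¬ G.Descendant y' x') : GC.Compatible (G.addDir x' y') := by
  rw [compatible_iff] at hG ⊢
  refine ⟨hG.1.addDir h, fun A B => (hG.2.1 A B).trans ⟨?_, ?_⟩, hG.2.2⟩
  · rintro ⟨v, w, hv, hw, hne, hvw⟩
    exact ⟨v, w, hv, hw, hne, .inl hvw⟩
  · rintro ⟨v, w, hv, hw, hne, hvw | ⟨rfl, rfl⟩⟩
    · exact ⟨v, w, hv, hw, hne, hvw⟩
    · exact ⟨x, y, hx.symm.trans hv, hy.symm.trans hw, hG.1.ne_of_dir hxy, hxy⟩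

open MixedGraph

lemma swapEndpoint_fst [DecidableEq GC.MicroV] (hst : s.1 = t.1) :
    (swapEndpoint s t n x y).1 = y.1 := by
  rw [swapEndpoint, Equiv.swap_apply_def]
  split_ifs <;> simp_all

lemma Compatible.swapBidir [DecidableEq GC.MicroV] (hG : GC.Compatible G) (hst : s.1 = t.1)
    (hs : n ≠ s) (ht : n ≠ t) : GC.Compatible (G.swapBidir s t n) := by
  rw [compatible_iff] at hG ⊢
  refine ⟨hG.1, hG.2.1, fun A B => (hG.2.2 A B).trans ?_⟩
  constructor
  · rintro ⟨x, y, rfl, rfl, hxy, hbidir⟩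
    exact ⟨swapEndpoint s t n y x, swapEndpoint s t n x y, swapEndpoint_fst hst,
      swapEndpoint_fst hst, swapEndpoint_ne hs ht hxy,
      by simpa only [MixedGraph.swapBidir, swapEndpoint_swapEndpoint hs ht] using hbidir⟩
  · rintro ⟨x, y, rfl, rfl, hxy, hbidir⟩
    exact ⟨swapEndpoint s t n y x, swapEndpoint s t n x y, swapEndpoint_fst hst,
      swapEndpoint_fst hst, swapEndpoint_ne hs ht hxy, hbidir⟩

lemma Compatible.exists_isGraft (hG : GC.Compatible G) (hst : s.1 = t.1)
    (hs : n ≠ s) (ht : n ≠ t) (hadj : G.adj s n)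
    (hout : ¬ G.intoHead n s → ¬ G.Descendant s t)
    (hin : ¬ G.intoHead s n → ¬ G.Descendant t s) :
    ∃ G', GC.Compatible G' ∧ IsGraft G G' s t n := by
  classical
  have hswap : GC.Compatible (G.swapBidir s t n) := hG.swapBidir hst hs ht
  by_cases hsn : G.intoHead s n <;> by_cases hns : G.intoHead n s
  · exact ⟨_, hswap, isGraft_swapBidir ht (hG.1.bidir_of_intoHead hsn hns)⟩
  · have hdir : G.dir s n := dir_of_not_intoHead hadj hns
    have hacyc : ¬ G.Descendant n t := fun h => hout hns (.head hdir h)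
    exact ⟨_, hswap.addDir hdir hst.symm rfl hacyc,
      isGraft_addDir_right ht hsn hns fun h => hacyc (.single h)⟩
  · have hdir : G.dir n s := dir_of_not_intoHead (adj_comm.mp hadj) hsn
    have hacyc : ¬ G.Descendant t n := fun h => hin hsn (.tail h hdir)
    exact ⟨_, hswap.addDir hdir rfl hst.symm hacyc,
      isGraft_addDir_left ht hns hsn fun h => hacyc (.single h)⟩
  · exact absurd (adj_iff_intoHead.mp hadj) (not_or_intro hsn hns)

end ClusterDAG

/-- Two interior positions of a list, holding the vertices `u` and `w`: the list reads
`front, a, u, mid, w, d, back`. -/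
structure InteriorPair (p : List V) where
  front : List V
  a : V
  u : V
  mid : List V
  w : V
  d : V
  back : List V
  eq_append : p = front ++ a :: u :: (mid ++ w :: d :: back)

namespace InteriorPair

variable {p : List V} (I : InteriorPair p)

/-- The vertex following the first position, so that the triple at `u` is `a, u, next`. -/
def next : V := (I.mid ++ [I.w]).head (by simp)

/-- The vertex preceding the second position, so that the triple at `w` is `prev, w, d`. -/
def prev : V := (I.u :: I.mid).getLast (by simp)

/-- The same two positions in the reversed list; this exchanges `u` and `w`. -/
def reverse : InteriorPair p.reverse where
  front := I.back.reverse
  a := I.d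
  u := I.w
  mid := I.mid.reverse
  w := I.u
  d := I.a
  back := I.front.reverse
  eq_append := by simp [I.eq_append]

lemma reverse_next : I.reverse.next = I.prev := by
  simp [next, prev, reverse, ← List.reverse_cons]

lemma reverse_prev : I.reverse.prev = I.next := by
  rw [← I.reverse.reverse_next]
  simp [next, reverse]

lemma segment_isInfix : I.u :: (I.mid ++ [I.w]) <:+: p :=
  ⟨I.front ++ [I.a], I.d :: I.back, by simp [I.eq_append]⟩

lemma mid_append_eq_cons : I.mid ++ [I.w] = I.next :: (I.mid ++ [I.w]).tail :=
  (List.cons_head_tail _).symm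

lemma exists_mid_eq_cons (hw : I.next ≠ I.w) (hprev : I.next ≠ I.prev) :
    ∃ l ≠ [], I.mid = I.next :: l := by
  match hmid : I.mid with
  | [] => simp [next, hmid] at hw
  | [x] => simp [next, prev, hmid] at hprev
  | x :: y :: l => exact ⟨y :: l, List.cons_ne_nil _ _, by simp [next, hmid]⟩

lemma left_isInfix : [I.a, I.u, I.next] <:+: p := by
  refine ⟨I.front, (I.mid ++ [I.w]).tail ++ I.d :: I.back, .trans ?_ I.eq_append.symm⟩
  have hmid : I.next :: ((I.mid ++ [I.w]).tail ++ I.d :: I.back) =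
      I.mid ++ I.w :: I.d :: I.back := by
    rw [← List.cons_append, ← mid_append_eq_cons, ← List.append_cons]
  simp [hmid]

lemma right_isInfix : [I.prev, I.w, I.d] <:+: p := by
  rw [← List.reverse_infix, ← I.reverse_next]
  exact I.reverse.left_isInfix

lemma pairwise_disjoint (hp : p.Nodup) :
    (I.front ++ [I.a, I.u]).Disjoint (I.mid ++ [I.w]) ∧
      (I.front ++ [I.a, I.u]).Disjoint (I.d :: I.back) ∧
        (I.mid ++ [I.w]).Disjoint (I.d :: I.back) := by
  have happend : p = (I.front ++ [I.a, I.u]) ++ ((I.mid ++ [I.w]) ++ I.d :: I.back) := by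
    simp [I.eq_append]
  rw [happend, List.nodup_append', List.nodup_append' (l₁ := I.mid ++ [I.w]),
    List.disjoint_append_right] at hp
  exact ⟨hp.2.2.1, hp.2.2.2, hp.2.1.2.2⟩

lemma left_isPrefix : I.front ++ [I.a, I.u] <+: p :=
  ⟨I.mid ++ I.w :: I.d :: I.back, by simp [I.eq_append]⟩

lemma right_isSuffix : I.w :: I.d :: I.back <:+ p :=
  ⟨I.front ++ I.a :: I.u :: I.mid, by simp [I.eq_append]⟩

/-- The pair of interior positions `i + 1` and `j + 1`. -/
def ofLT {i j : ℕ} (hij : i < j) (hj : j + 2 < p.length) : InteriorPair p where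
  front := p.take i
  a := p[i]
  u := p[i + 1]
  mid := (p.drop (i + 2)).take (j - i - 1)
  w := p[j + 1]
  d := p[j + 2]
  back := p.drop (j + 3)
  eq_append := by
    have hdrop : p.drop (j + 1) = (p.drop (i + 2)).drop (j - i - 1) := by
      rw [List.drop_drop]; congr 1; omega
    rw [← List.drop_eq_getElem_cons, ← List.drop_eq_getElem_cons, hdrop, List.take_append_drop,
      ← List.drop_eq_getElem_cons, ← List.drop_eq_getElem_cons, List.take_append_drop]

lemma ofLT_next {i j : ℕ} (hij : i < j) (hj : j + 2 < p.length) :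
    (ofLT hij hj).next = p[i + 2] := by
  simp only [next, ofLT, List.head_eq_getElem, List.getElem_append, List.getElem_take,
    List.getElem_drop, List.getElem_singleton]
  split_ifs with h
  · rfl
  · simp only [List.length_take, List.length_drop] at h
    congr 1
    omega

lemma ofLT_prev {i j : ℕ} (hij : i < j) (hj : j + 2 < p.length) : (ofLT hij hj).prev = p[j] := by
  simp only [prev, ofLT, List.getLast_eq_getElem, List.getElem_cons, List.getElem_take,
    List.getElem_drop, List.length_cons, List.length_take, List.length_drop]
  split_ifs with h <;> congr 1 <;> omega

lemma exists_of_not_atMostOneTriple {P : V → V → V → Prop} {T : Set V}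
    (h : ¬ AtMostOneTriple P T p) :
    ∃ I : InteriorPair p, P I.a I.u I.next ∧ P I.prev I.w I.d ∧ I.u ∈ T ∧ I.w ∈ T := by
  have hpair {i j : ℕ} (hij : i < j) (hj : j + 2 < p.length) (hPi : P p[i] p[i + 1] p[i + 2])
      (hPj : P p[j] p[j + 1] p[j + 2]) (hTi : p[i + 1] ∈ T) (hTj : p[j + 1] ∈ T) :
      ∃ I : InteriorPair p, P I.a I.u I.next ∧ P I.prev I.w I.d ∧ I.u ∈ T ∧ I.w ∈ T :=
    ⟨ofLT hij hj, ofLT_next hij hj ▸ hPi, ofLT_prev hij hj ▸ hPj, hTi, hTj⟩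
  simp only [AtMostOneTriple, not_forall] at h
  obtain ⟨i, j, hi, hj, hPi, hPj, hTi, hTj, hne⟩ := h
  obtain hij | hji := Nat.lt_or_gt_of_ne hne
  exacts [hpair hij hj hPi hPj hTi hTj, hpair hji hi hPj hPi hTj hTi]

end InteriorPair

namespace ClusterDAG

open MixedGraph

variable {C : Type*} {GC : ClusterDAG C} {X Y : Set GC.MicroV} {Zc : Set C}
  {G G' : MixedGraph GC.MicroV} {p : List GC.MicroV}

/-- `p` is an active path from `X` to `Y`, given the clusters in `Zc`, in the compatible micro graph
`G`. -/
structure Connection (GC : ClusterDAG C) (X Y : Set GC.MicroV) (Zc : Set C)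
    (G : MixedGraph GC.MicroV) (p : List GC.MicroV) : Prop where
  compatible : GC.Compatible G
  activePath : G.ActivePath (GC.microSet Zc) p
  head_mem : ∃ x ∈ X, p.head? = some x
  getLast_mem : ∃ y ∈ Y, p.getLast? = some y

/-- Some compatible micro graph, possibly different from the one carrying `p`, has an active path
from `X` to `Y` that is shorter than `p`. -/
def HasShorterConnection (GC : ClusterDAG C) (X Y : Set GC.MicroV) (Zc : Set C)
    (p : List GC.MicroV) : Prop :=
  ∃ G' p', GC.Connection X Y Zc G' p' ∧ p'.length < p.length

lemma Connection.reverse (hp : GC.Connection X Y Zc G p) : GC.Connection Y X Zc G p.reverse where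
  compatible := hp.compatible
  activePath := ⟨hp.activePath.1.reverse, List.nodup_reverse.mpr hp.activePath.2⟩
  head_mem := by simpa using hp.getLast_mem
  getLast_mem := by simpa using hp.head_mem

lemma HasShorterConnection.of_reverse (h : GC.HasShorterConnection Y X Zc p.reverse) :
    GC.HasShorterConnection X Y Zc p :=
  let ⟨G', p', hp', hlt⟩ := h
  ⟨G', p'.reverse, hp'.reverse, by simpa using hlt⟩

namespace Connection

lemma activeTriple_left (hp : GC.Connection X Y Zc G p) (I : InteriorPair p) :
    G.ActiveTriple (GC.microSet Zc) I.a I.u I.next :=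
  hp.activePath.1.activeTriple I.left_isInfix

lemma activeTriple_right (hp : GC.Connection X Y Zc G p) (I : InteriorPair p) :
    G.ActiveTriple (GC.microSet Zc) I.prev I.w I.d :=
  hp.activePath.1.activeTriple I.right_isInfix

lemma u_ne_w (hp : GC.Connection X Y Zc G p) (I : InteriorPair p) : I.u ≠ I.w := fun h =>
  (I.pairwise_disjoint hp.activePath.2).1 (List.mem_append_right _ (by simp : I.u ∈ [I.a, I.u]))
    (by simp [h])

lemma mem_ancestors_next_or (hp : GC.Connection X Y Zc G p) (I : InteriorPair p)
    (h : G.dir I.u I.next) :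
    I.next ∈ G.ancestors (GC.microSet Zc) ∨ G.dir I.prev I.w ∧ G.Descendant I.u I.w := by
  have hwalk := hp.activePath.1.of_isInfix I.segment_isInfix (List.cons_ne_nil _ _)
  rw [I.mid_append_eq_cons] at hwalk
  refine (hwalk.mem_ancestors_or_isChain_dir h).imp_right fun hchain => ?_
  rw [← I.mid_append_eq_cons] at hchain
  refine ⟨(List.isChain_append.mp hchain).2.2 _ (List.getLast_mem_getLast? _) _ rfl,
    List.relationReflTransGen_of_exists_isChain_cons _ hchain (by simp)⟩

lemma hasShorterConnection_of_sublist (hp : GC.Connection X Y Zc G p) (I : InteriorPair p)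
    {K : List GC.MicroV} (hG' : GC.Compatible G') (hK : K.Sublist (I.mid ++ [I.w]))
    (hlt : K.length < (I.mid ++ [I.w]).length)
    (hleft : G'.ActiveWalk (GC.microSet Zc) (I.front ++ [I.a, I.u]))
    (hright : G'.ActiveWalk (GC.microSet Zc) (I.a :: I.u :: (K ++ I.d :: I.back))) :
    GC.HasShorterConnection X Y Zc p := by
  have hsub : (I.front ++ I.a :: I.u :: (K ++ I.d :: I.back)).Sublist
      (I.front ++ I.a :: I.u :: (I.mid ++ I.w :: I.d :: I.back)) := by
    rw [List.append_cons I.mid]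
    exact (((hK.append_right _).cons_cons _).cons_cons _).append_left _
  have hhead := I.eq_append ▸ hp.head_mem
  have hlast := I.eq_append ▸ hp.getLast_mem
  refine ⟨G', _, ⟨hG', ⟨activeWalk_append_cons_cons.mpr ⟨hleft, hright⟩,
    (I.eq_append ▸ hp.activePath.2).sublist hsub⟩, ?_, ?_⟩, ?_⟩
  · simpa using hhead
  · simpa [List.getLast?_cons] using hlast
  · rw [congrArg List.length I.eq_append]
    simp only [List.length_append, List.length_cons, List.length_nil] at hlt ⊢
    omega

lemma hasShorterConnection_of_skip (hp : GC.Connection X Y Zc G p) (I : InteriorPair p)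
    (huw : I.u.1 = I.w.1)
    (hout : ¬ G.intoHead I.d I.w → ¬ G.Descendant I.w I.u)
    (hin : ¬ G.intoHead I.w I.d → ¬ G.Descendant I.u I.w)
    (hcol : G.intoHead I.a I.u → G.intoHead I.d I.w → I.u ∈ G.ancestors (GC.microSet Zc))
    (hnon : ¬ (G.intoHead I.a I.u ∧ G.intoHead I.d I.w) → I.u ∉ GC.microSet Zc) :
    GC.HasShorterConnection X Y Zc p := by
  obtain ⟨-, hleft_right, hmid_right⟩ := I.pairwise_disjoint hp.activePath.2
  have hd : I.d ∉ I.front ++ [I.a, I.u] := fun h => hleft_right h (by simp)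
  have hu : I.u ∉ I.d :: I.back := hleft_right (by simp)
  have hw : I.w ∉ I.d :: I.back := hmid_right (by simp)
  have hwd := hp.activePath.1.of_isInfix I.right_isSuffix.isInfix (List.cons_ne_nil _ _)
  have hau := hp.activePath.1.of_isInfix I.left_isPrefix.isInfix (by simp)
  obtain ⟨G', hG', hgraft⟩ := hp.compatible.exists_isGraft huw.symm
    (fun h => hw (by simp [h])) (fun h => hu (by simp [h])) (activeWalk_cons_cons.mp hwd).1 hout hin
  have hau' := hgraft.activeWalk_of_notMem hau hd
  have htriple : G'.ActiveTriple (GC.microSet Zc) I.a I.u I.d := by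
    have hinto : G'.intoHead I.a I.u ↔ G.intoHead I.a I.u := hgraft.intoHead_iff
      (fun h => absurd (h ▸ hd) (by simp)) (fun h => absurd (h ▸ hd) (by simp))
    rw [activeTriple_iff, Collider, hinto, hgraft.intoHead_left]
    exact ⟨fun h => hgraft.ancestors_subset (hcol h.1 h.2), hnon⟩
  refine hp.hasShorterConnection_of_sublist I (K := []) hG' (List.nil_sublist _) (by simp) hau' ?_
  have hadj : G'.adj I.a I.u :=
    activeWalk_pair.mp (hau'.of_isInfix ⟨I.front, [], by simp⟩ (by simp))
  exact activeWalk_cons_cons.mpr ⟨hadj, fun _ h => Option.some_inj.mp h ▸ htriple,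
    hgraft.activeWalk_cons hwd hw hu⟩

lemma not_descendant_or_not_descendant (hp : GC.Connection X Y Zc G p) (I : InteriorPair p) :
    ¬ G.Descendant I.u I.w ∨ ¬ G.Descendant I.w I.u :=
  not_and_or.mp fun h => hp.u_ne_w I (hp.compatible.1.descendant_antisymm h.1 h.2)

lemma hasShorterConnection_of_collider (hp : GC.Connection X Y Zc G p) (I : InteriorPair p)
    (huw : I.u.1 = I.w.1) (hu : G.Collider I.a I.u I.next) (hw : G.Collider I.prev I.w I.d) :
    GC.HasShorterConnection X Y Zc p := by
  wlog hacyc : ¬ G.Descendant I.u I.w generalizing X Y p I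
  · refine .of_reverse (this hp.reverse I.reverse huw.symm ?_ ?_
      ((hp.not_descendant_or_not_descendant I).resolve_left hacyc))
    · exact I.reverse_next ▸ collider_comm.mp hw
    · exact I.reverse_prev ▸ collider_comm.mp hu
  exact hp.hasShorterConnection_of_skip I huw (absurd hw.2) (fun _ => hacyc)
    (fun _ _ => (hp.activeTriple_left I).mem_ancestors hu) (absurd ⟨hu.1, hw.2⟩)

lemma hasShorterConnection_of_mem_microSet (hp : GC.Connection X Y Zc G p) (I : InteriorPair p)
    (huw : I.u.1 = I.w.1) (hZ : I.u ∈ GC.microSet Zc) : GC.HasShorterConnection X Y Zc p :=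
  hp.hasShorterConnection_of_collider I huw ((hp.activeTriple_left I).collider_of_mem hZ)
    ((hp.activeTriple_right I).collider_of_mem (huw ▸ hZ : I.w.1 ∈ Zc))

lemma hasShorterConnection_of_dir_next_of_dir_d (hp : GC.Connection X Y Zc G p)
    (I : InteriorPair p) (huw : I.u.1 = I.w.1) (hu : G.dir I.u I.next) (hw : G.dir I.w I.d)
    (hacyc : ¬ G.Descendant I.w I.u) (hZ : I.u ∉ GC.microSet Zc) :
    GC.HasShorterConnection X Y Zc p := by
  refine hp.hasShorterConnection_of_skip I huw (fun _ => hacyc) (absurd (.inl hw))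
    (fun _ hdw => ?_) (fun _ => hZ)
  obtain hnext | ⟨hprev, hdesc⟩ := hp.mem_ancestors_next_or I hu
  · exact Descendant.mem_ancestors (.single hu) hnext
  · exact hdesc.mem_ancestors ((hp.activeTriple_right I).mem_ancestors ⟨.inl hprev, hdw⟩)

lemma hasShorterConnection_of_dir_next_of_d_dir (hp : GC.Connection X Y Zc G p)
    (I : InteriorPair p) (huw : I.u.1 = I.w.1) (hu : G.dir I.u I.next) (hw : G.dir I.d I.w)
    (hacyc : ¬ G.Descendant I.u I.w) (hZ : I.u ∉ GC.microSet Zc) :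
    GC.HasShorterConnection X Y Zc p :=
  hp.hasShorterConnection_of_skip I huw (absurd (.inl hw)) (fun _ => hacyc)
    (fun _ _ => Descendant.mem_ancestors (.single hu)
      ((hp.mem_ancestors_next_or I hu).resolve_right fun h => hacyc h.2)) (fun _ => hZ)

lemma hasShorterConnection_of_next_dir_of_dir_d (hp : GC.Connection X Y Zc G p)
    (I : InteriorPair p) (huw : I.u.1 = I.w.1) (hu : G.dir I.next I.u) (hw : G.dir I.w I.d)
    (hacyc : ¬ G.Descendant I.w I.u) (hZ : I.u ∉ GC.microSet Zc) :
    GC.HasShorterConnection X Y Zc p :=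
  hp.hasShorterConnection_of_skip I huw (fun _ => hacyc) (absurd (.inl hw))
    (fun hau _ => (hp.activeTriple_left I).mem_ancestors ⟨hau, .inl hu⟩) (fun _ => hZ)

lemma hasShorterConnection_of_dir_next_of_prev_dir (hp : GC.Connection X Y Zc G p)
    (I : InteriorPair p) (huw : I.u.1 = I.w.1) (hu : G.dir I.u I.next) (hw : G.dir I.prev I.w)
    (hdesc : G.Descendant I.w I.u) (hZ : I.w ∉ GC.microSet Zc) :
    GC.HasShorterConnection X Y Zc p := by
  have hacyc : ¬ G.Descendant I.u I.w :=
    (hp.not_descendant_or_not_descendant I).resolve_right (not_not.mpr hdesc)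
  have hnext : I.next ∈ G.ancestors (GC.microSet Zc) :=
    (hp.mem_ancestors_next_or I hu).resolve_right fun h => hacyc h.2
  have hnext_w : I.next ≠ I.w := fun h => hacyc (.single (h ▸ hu))
  obtain ⟨l, hl, hmid⟩ := I.exists_mid_eq_cons hnext_w
    fun h => hacyc (.tail (.single hu) (h ▸ hw))
  obtain ⟨hleft_mid, -, hmid_right⟩ := I.pairwise_disjoint hp.activePath.2
  have hw_left : I.w ∉ I.front ++ [I.a, I.u] := fun h => hleft_mid h (by simp)
  have hnext_right : I.next ∉ I.w :: I.d :: I.back :=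
    List.not_mem_cons_of_ne_of_not_mem hnext_w (hmid_right (by simp [hmid]))
  have hleft := (hp.activePath.1.of_isInfix I.left_isPrefix.isInfix (by simp)).addDir (b := I.next)
    (.inl hw_left)
  have hau_next := (hp.activePath.1.of_isInfix I.left_isInfix (by simp)).addDir (a := I.w)
    (b := I.next) (.inl (by simp_all [eq_comm]))
  have hright := (hp.activePath.1.of_isInfix I.right_isSuffix.isInfix (by simp)).addDir (a := I.w)
    (.inr hnext_right)
  -- The shorter path is `…, a, u → next ← w, d, …`.
  refine hp.hasShorterConnection_of_sublist I (K := [I.next, I.w])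
    (hp.compatible.addDir hu huw.symm rfl fun h =>
      hp.compatible.1.not_descendant_of_dir hu (h.trans hdesc))
    (by simp [hmid]) (by simpa [hmid] using List.length_pos_iff.mpr hl) hleft
    (activeWalk_append_cons_cons (P := [I.a]).mpr ⟨hau_next, activeWalk_cons_cons.mpr
      ⟨.inl (.inl hu), fun _ h => Option.some_inj.mp h ▸ ?_, activeWalk_cons_cons.mpr
        ⟨.inr (.inl (.inr ⟨rfl, rfl⟩)), fun _ h => Option.some_inj.mp h ▸ ?_, hright⟩⟩⟩)
  · exact activeTriple_iff.mpr ⟨fun _ => ancestors_subset_addDir hnext,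
      absurd ⟨.inl (.inl hu), .inl (.inr ⟨rfl, rfl⟩)⟩⟩
  · exact activeTriple_iff.mpr ⟨fun _ => ancestors_subset_addDir
      (Descendant.mem_ancestors (hdesc.tail hu) hnext), fun _ => hZ⟩

lemma hasShorterConnection_of_fork (hp : GC.Connection X Y Zc G p) (I : InteriorPair p)
    (huw : I.u.1 = I.w.1) (hu : ForkAt G I.a I.u I.next) (hw : ForkAt G I.prev I.w I.d) :
    GC.HasShorterConnection X Y Zc p := by
  by_cases hZ : I.u ∈ GC.microSet Zc
  · exact hp.hasShorterConnection_of_mem_microSet I huw hZ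
  obtain hacyc | hacyc := hp.not_descendant_or_not_descendant I
  · exact .of_reverse (hp.reverse.hasShorterConnection_of_dir_next_of_dir_d I.reverse huw.symm
      (I.reverse_next ▸ hw.1) hu.1 hacyc (huw ▸ hZ : I.w.1 ∉ Zc))
  · exact hp.hasShorterConnection_of_dir_next_of_dir_d I huw hu.2 hw.2 hacyc hZ

lemma hasShorterConnection_of_forward_chains (hp : GC.Connection X Y Zc G p) (I : InteriorPair p)
    (huw : I.u.1 = I.w.1) (hu : G.dir I.u I.next) (hw : G.dir I.prev I.w ∧ G.dir I.w I.d)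
    (hZ : I.u ∉ GC.microSet Zc) : GC.HasShorterConnection X Y Zc p := by
  by_cases hwu : G.Descendant I.w I.u
  · exact hp.hasShorterConnection_of_dir_next_of_prev_dir I huw hu hw.1 hwu (huw ▸ hZ : I.w.1 ∉ Zc)
  · exact hp.hasShorterConnection_of_dir_next_of_dir_d I huw hu hw.2 hwu hZ

lemma hasShorterConnection_of_chain (hp : GC.Connection X Y Zc G p) (I : InteriorPair p)
    (huw : I.u.1 = I.w.1) (hu : ChainAt G I.a I.u I.next) (hw : ChainAt G I.prev I.w I.d) :
    GC.HasShorterConnection X Y Zc p := by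
  by_cases hZ : I.u ∈ GC.microSet Zc
  · exact hp.hasShorterConnection_of_mem_microSet I huw hZ
  have hZw : I.w ∉ GC.microSet Zc := (huw ▸ hZ : I.w.1 ∉ Zc)
  have hacyc := hp.not_descendant_or_not_descendant I
  obtain ⟨hau, hun⟩ | ⟨hnu, hua⟩ := hu <;> obtain ⟨hpw, hwd⟩ | ⟨hdw, hwp⟩ := hw
  · exact hp.hasShorterConnection_of_forward_chains I huw hun ⟨hpw, hwd⟩ hZ
  · obtain huw' | hwu := hacyc
    · exact hp.hasShorterConnection_of_dir_next_of_d_dir I huw hun hdw huw' hZ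
    · exact .of_reverse (hp.reverse.hasShorterConnection_of_dir_next_of_d_dir I.reverse huw.symm
        (I.reverse_next ▸ hwp) hau hwu hZw)
  · obtain huw' | hwu := hacyc
    · exact .of_reverse (hp.reverse.hasShorterConnection_of_next_dir_of_dir_d I.reverse huw.symm
        (I.reverse_next ▸ hpw) hua huw' hZw)
    · exact hp.hasShorterConnection_of_next_dir_of_dir_d I huw hnu hwd hwu hZ
  · exact .of_reverse (hp.reverse.hasShorterConnection_of_forward_chains I.reverse huw.symm
      (I.reverse_next ▸ hwp) ⟨I.reverse_prev ▸ hnu, hua⟩ hZw)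

lemma exists_not_hasShorterConnection (hp : GC.Connection X Y Zc G p) :
    ∃ G' p', GC.Connection X Y Zc G' p' ∧ ¬ GC.HasShorterConnection X Y Zc p' := by
  induction hn : p.length using Nat.strong_induction_on generalizing G p with
  | _ n ih =>
    by_cases hshort : GC.HasShorterConnection X Y Zc p
    · obtain ⟨G', p', hp', hlt⟩ := hshort
      exact ih p'.length (hn ▸ hlt) hp' rfl
    · exact ⟨G, p, hp, hshort⟩

end Connection

end ClusterDAG

theorem reduce_complexity_path_general {C : Type*} (GC : ClusterDAG C) (X Y : Set GC.MicroV)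
    (Zc : Set C) (G : MixedGraph GC.MicroV) (hG : GC.Compatible G) (p : List GC.MicroV)
    (hp : G.ActivePath (GC.microSet Zc) p) (hx : ∃ x ∈ X, p.head? = some x)
    (hy : ∃ y ∈ Y, p.getLast? = some y) :
    ∃ G' : MixedGraph GC.MicroV, GC.Compatible G' ∧
      ∃ p' : List GC.MicroV, G'.ActivePath (GC.microSet Zc) p' ∧
        (∃ x ∈ X, p'.head? = some x) ∧ (∃ y ∈ Y, p'.getLast? = some y) ∧
        ∀ A : C, AtMostOneTriple G'.Collider {v : GC.MicroV | v.1 = A} p' ∧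
          AtMostOneTriple (ForkAt G') {v : GC.MicroV | v.1 = A} p' ∧
          AtMostOneTriple (ChainAt G') {v : GC.MicroV | v.1 = A} p' := by
  obtain ⟨G', p', hp', hshortest⟩ :=
    ClusterDAG.Connection.exists_not_hasShorterConnection ⟨hG, hp, hx, hy⟩
  have hone {A : C} {P : GC.MicroV → GC.MicroV → GC.MicroV → Prop}
      (h : ∀ I : InteriorPair p', I.u.1 = I.w.1 → P I.a I.u I.next → P I.prev I.w I.d →
        GC.HasShorterConnection X Y Zc p') :
      AtMostOneTriple P {v : GC.MicroV | v.1 = A} p' := by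
    by_contra hmany
    obtain ⟨I, hu, hw, huA, hwA⟩ := InteriorPair.exists_of_not_atMostOneTriple hmany
    exact hshortest (h I (huA.trans hwA.symm) hu hw)
  exact ⟨G', hp'.compatible, p', hp'.activePath, hp'.head_mem, hp'.getLast_mem, fun A =>
    ⟨hone hp'.hasShorterConnection_of_collider, hone hp'.hasShorterConnection_of_fork,
      hone hp'.hasShorterConnection_of_chain⟩⟩

/-- Reducing the complexity of an active path within a single cluster:
an active path can be replaced (in some compatible micro graph) by one with at most one
collider, at most one fork and at most one chain among the variables of cluster `V`. -/
theorem reduce_complexity_path {C : Type*} [Fintype C] (GC : ClusterDAG C)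
    (hadm : GC.Admissible)
    (Xc Yc Zc : Set C) (hXY : Disjoint Xc Yc) (hXZ : Disjoint Xc Zc) (hYZ : Disjoint Yc Zc)
    (Vc : C) (Gm : MixedGraph GC.MicroV) (hGm : GC.Compatible Gm)
    (p : List GC.MicroV) (hp : Gm.ActivePath (GC.microSet Zc) p)
    (hx : ∃ x ∈ GC.microSet Xc, p.head? = some x)
    (hy : ∃ y ∈ GC.microSet Yc, p.getLast? = some y) :
    ∃ Gm' : MixedGraph GC.MicroV, GC.Compatible Gm' ∧
      ∃ p' : List GC.MicroV, Gm'.ActivePath (GC.microSet Zc) p' ∧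
        (∃ x ∈ GC.microSet Xc, p'.head? = some x) ∧
        (∃ y ∈ GC.microSet Yc, p'.getLast? = some y) ∧
        AtMostOneTriple Gm'.Collider {v : GC.MicroV | v.1 = Vc} p' ∧
        AtMostOneTriple (ForkAt Gm') {v : GC.MicroV | v.1 = Vc} p' ∧
        AtMostOneTriple (ChainAt Gm') {v : GC.MicroV | v.1 = Vc} p' := by
  obtain ⟨G', hG', p', hp', hx', hy', hone⟩ :=
    reduce_complexity_path_general GC _ _ Zc Gm hGm p hp hx hy
  exact ⟨G', hG', p', hp', hx', hy', hone Vc⟩
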